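/- Let Ω be a finite type, let P and Q be probability distributions on Ω, and let C be a coupling of P and Q with Pr_C[X ≠ Y] > 0 and dTV(P, Q) / Pr_C[X ≠ Y] ≥ γ for some γ > 0. Let Ω₊ = {ω : Pr_C[X = ω ∧ X ≠ Y] > 0}, π(ω) = Pr_C[X = ω ∧ X ≠ Y] / Pr_C[X ≠ Y], and f(ω) = max{0, P(ω) − Q(ω)} / Pr_C[X = ω ∧ X ≠ Y] for ω ∈ Ω₊. Let ε > 0, let m ≥ 100/(γ ε²), let ω₁, …, ω_m be i.i.d. samples from π, and set d̂ = ((1/m) Σ_{i=1}^m f(ω_i)) · Pr_C[X ≠ Y]. Then Pr[ (1 − ε) dTV(P, Q) ≤ d̂ ≤ (1 + ε) dTV(P, Q) ] ≥ 99/100. -/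

import Mathlib

open Finset

/-- `Pr_C[X = ω ∧ X ≠ Y]` for a coupling `C`. -/
noncomputable def prEqNe {Ω : Type*} [Fintype Ω] [DecidableEq Ω] (C : Ω → Ω → ℝ) (ω : Ω) : ℝ :=
  ∑ y ∈ Finset.univ.filter (fun y => y ≠ ω), C ω y

/-- `Pr_C[X ≠ Y]` for a coupling `C`. -/
noncomputable def prNe {Ω : Type*} [Fintype Ω] [DecidableEq Ω] (C : Ω → Ω → ℝ) : ℝ :=
  ∑ x, prEqNe C x

/-- Total variation distance between two distributions on a finite type. -/
noncomputable def dTV {Ω : Type*} [Fintype Ω] (P Q : Ω → ℝ) : ℝ :=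
  (1/2) * ∑ ω, |P ω - Q ω|

/-- The estimator `f(ω) = max{0, P ω − Q ω} / Pr_C[X = ω ∧ X ≠ Y]`. -/
noncomputable def estF {Ω : Type*} [Fintype Ω] [DecidableEq Ω]
    (P Q : Ω → ℝ) (C : Ω → Ω → ℝ) (ω : Ω) : ℝ :=
  max 0 (P ω - Q ω) / prEqNe C ω

/-!
Under `π`, the estimator `f` has mean `μ = dTV(P, Q) / Pr[X ≠ Y] ≥ γ`.
The coupling inequality `P(ω) - Q(ω) ≤ Pr[X = ω ∧ X ≠ Y]` puts the values of `f` in `[0, 1]`, so the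
Bhatia-Davis inequality bounds its variance by `(1 - μ) μ ≤ μ`: the variance is small whenever the
mean is. Chebyshev's inequality for the mean of `m` samples then bounds the probability of a
relative error above `ε` by `μ / (m (ε μ)²) = 1 / (m ε² μ) ≤ 1 / (m ε² γ)`.
-/

open MeasureTheory ProbabilityTheory
open scoped BigOperators

theorem measureReal_pi_finset {ι : Type*} [Fintype ι] {α : ι → Type*}
    [∀ i, MeasurableSpace (α i)] [∀ i, MeasurableSingletonClass (α i)]
    (μ : ∀ i, Measure (α i)) [∀ i, SigmaFinite (μ i)] (s : Finset (∀ i, α i)) :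
    (Measure.pi μ).real s = ∑ w ∈ s, ∏ i, (μ i).real {w i} := by
  rw [← sum_measureReal_singleton]
  simp only [measureReal_def, Measure.pi_singleton, ENNReal.toReal_prod]

section SampleMean

variable {ι α : Type*} [Fintype ι] [MeasurableSpace α] {μ : Measure α} [IsProbabilityMeasure μ]
  {f : α → ℝ}

theorem memLp_expect_pi {p : ENNReal} (hf : MemLp f p μ) :
    MemLp (fun w : ι → α ↦ 𝔼 i, f (w i)) p (Measure.pi fun _ ↦ μ) := by
  simp only [Fintype.expect_eq_sum_div_card, div_eq_inv_mul]
  exact (memLp_finsetSum _ fun i _ ↦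
    hf.comp_measurePreserving (measurePreserving_eval (fun _ ↦ μ) i)).const_mul _

theorem integral_expect_pi [Nonempty ι] (hf : Integrable f μ) :
    ∫ w : ι → α, 𝔼 i, f (w i) ∂(Measure.pi fun _ ↦ μ) = ∫ a, f a ∂μ := by
  simp only [Fintype.expect_eq_sum_div_card]
  rw [integral_div, integral_finsetSum _ fun i _ ↦ integrable_comp_eval hf]
  simp [integral_comp_eval (μ := fun _ : ι ↦ μ) hf.aestronglyMeasurable]

theorem variance_expect_pi (hf : MemLp f 2 μ) :
    Var[fun w : ι → α ↦ 𝔼 i, f (w i); Measure.pi fun _ ↦ μ] = Var[f; μ] / Fintype.card ι := by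
  have hsum := variance_sum_pi (ι := ι) fun _ ↦ hf
  simp only [sum_fn, sum_const, card_univ, nsmul_eq_mul] at hsum
  simp only [Fintype.expect_eq_sum_div_card, div_eq_inv_mul, variance_const_mul, hsum]
  field_simp

theorem one_sub_variance_div_le_measureReal_pi_abs_expect_sub_le [Nonempty ι] (hf : MemLp f 2 μ)
    {c : ℝ} (hc : 0 < c) :
    1 - Var[f; μ] / (Fintype.card ι * c ^ 2) ≤
      (Measure.pi fun _ : ι ↦ μ).real {w | |𝔼 i, f (w i) - ∫ a, f a ∂μ| ≤ c} := by
  set ν := Measure.pi fun _ : ι ↦ μ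
  set near : Set (ι → α) := {w | |𝔼 i, f (w i) - ∫ a, f a ∂μ| ≤ c}
  set far : Set (ι → α) := {w | c ≤ |𝔼 i, f (w i) - ∫ a, f a ∂μ|}
  have chebyshev : ν.real far ≤ Var[f; μ] / (Fintype.card ι * c ^ 2) := by
    have h := meas_ge_le_variance_div_sq (memLp_expect_pi (ι := ι) hf) hc
    rw [integral_expect_pi (hf.integrable one_le_two), variance_expect_pi hf, div_div] at h
    exact ENNReal.toReal_le_of_le_ofReal
      (div_nonneg (variance_nonneg _ _) (by positivity)) h
  have cover : near ∪ far = Set.univ := Set.eq_univ_of_forall fun _ ↦ le_total _ c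
  have total : 1 ≤ ν.real near + ν.real far := by
    simpa [cover] using measureReal_union_le (μ := ν) near far
  linarith

theorem one_sub_one_div_le_measureReal_pi_abs_expect_sub_le_mul [Nonempty ι] (hf : AEMeasurable f μ)
    (hf01 : ∀ᵐ a ∂μ, f a ∈ Set.Icc 0 1) (hmean : 0 < ∫ a, f a ∂μ) {ε : ℝ} (hε : 0 < ε) :
    1 - 1 / (Fintype.card ι * ε ^ 2 * ∫ a, f a ∂μ) ≤
      (Measure.pi fun _ : ι ↦ μ).real
        {w | |𝔼 i, f (w i) - ∫ a, f a ∂μ| ≤ ε * ∫ a, f a ∂μ} := by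
  refine le_trans ?_ (one_sub_variance_div_le_measureReal_pi_abs_expect_sub_le
    (memLp_of_bounded hf01 hf.aestronglyMeasurable 2) (mul_pos hε hmean))
  set M := ∫ a, f a ∂μ
  have hvar : Var[f; μ] ≤ M :=
    calc Var[f; μ] ≤ (1 - M) * (M - 0) := variance_le_sub_mul_sub hf01 hf
      _ ≤ M := by linarith [mul_pos hmean hmean]
  gcongr 1 - ?_
  calc Var[f; μ] / (Fintype.card ι * (ε * M) ^ 2)
      ≤ M / (Fintype.card ι * (ε * M) ^ 2) := by gcongr
    _ = 1 / (Fintype.card ι * ε ^ 2 * M) := by field_simp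

theorem one_sub_le_measureReal_pi_abs_expect_sub_le_mul (hf : AEMeasurable f μ)
    (hf01 : ∀ᵐ a ∂μ, f a ∈ Set.Icc 0 1) {γ ε δ : ℝ} (hγ : 0 < γ) (hε : 0 < ε) (hδ : 0 < δ)
    (hmean : γ ≤ ∫ a, f a ∂μ) (hcard : 1 / (δ * (γ * ε ^ 2)) ≤ Fintype.card ι) :
    1 - δ ≤ (Measure.pi fun _ : ι ↦ μ).real
      {w | |𝔼 i, f (w i) - ∫ a, f a ∂μ| ≤ ε * ∫ a, f a ∂μ} := by
  have card_pos : (0 : ℝ) < Fintype.card ι := lt_of_lt_of_le (by positivity) hcard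
  have : Nonempty ι := Fintype.card_pos_iff.mp (by exact_mod_cast card_pos)
  have failure_le : 1 / (Fintype.card ι * ε ^ 2 * ∫ a, f a ∂μ) ≤ δ := by
    rw [div_le_iff₀ (by positivity)] at hcard
    rw [div_le_iff₀ (mul_pos (by positivity) (hγ.trans_le hmean))]
    calc 1 ≤ Fintype.card ι * (δ * (γ * ε ^ 2)) := hcard
      _ = δ * (Fintype.card ι * ε ^ 2 * γ) := by ring
      _ ≤ δ * (Fintype.card ι * ε ^ 2 * ∫ a, f a ∂μ) := by gcongr
  exact (sub_le_sub_left failure_le 1).trans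
    (one_sub_one_div_le_measureReal_pi_abs_expect_sub_le_mul hf hf01 (hγ.trans_le hmean) hε)

end SampleMean

theorem abs_sub_div_le_mul_div_iff {K : Type*} [Field K] [LinearOrder K]
    [IsStrictOrderedRing K] {a d N ε : K} (hN : 0 < N) :
    |a - d / N| ≤ ε * (d / N) ↔ (1 - ε) * d ≤ a * N ∧ a * N ≤ (1 + ε) * d := by
  have hlower : (1 - ε) * d ≤ a * N ↔ d / N - ε * (d / N) ≤ a := by
    rw [← div_le_iff₀ hN]; ring_nf
  have hupper : a * N ≤ (1 + ε) * d ↔ a ≤ d / N + ε * (d / N) := by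
    rw [← le_div_iff₀ hN]; ring_nf
  rw [abs_sub_le_iff, hlower, hupper, sub_le_iff_le_add', sub_le_comm, and_comm]

section Coupling

variable {Ω : Type*} [Fintype Ω]

theorem dTV_eq_sum_max_zero_sub {P Q : Ω → ℝ} (h : ∑ ω, P ω = ∑ ω, Q ω) :
    dTV P Q = ∑ ω, max 0 (P ω - Q ω) := by
  have hmax (ω : Ω) : max 0 (P ω - Q ω) = 2⁻¹ * (|P ω - Q ω| + (P ω - Q ω)) := by
    rw [sup_eq_half_smul_add_add_abs_sub' ℝ, smul_eq_mul, zero_add, sub_zero, add_comm (P ω - Q ω)]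
  simp only [hmax, ← mul_sum, sum_add_distrib, sum_sub_distrib, h, sub_self,
    add_zero, dTV, one_div]

variable [DecidableEq Ω] {P Q : Ω → ℝ} {C : Ω → Ω → ℝ}

theorem prEqNe_nonneg (hC0 : ∀ x y, 0 ≤ C x y) (ω : Ω) : 0 ≤ prEqNe C ω :=
  sum_nonneg fun y _ ↦ hC0 ω y

theorem max_zero_sub_le_prEqNe (hC0 : ∀ x y, 0 ≤ C x y) (hCP : ∀ ω, ∑ y, C ω y = P ω)
    (hCQ : ∀ ω, ∑ x, C x ω = Q ω) (ω : Ω) : max 0 (P ω - Q ω) ≤ prEqNe C ω := by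
  have hdiag : C ω ω ≤ Q ω := by
    rw [← hCQ ω]
    exact single_le_sum (fun x _ ↦ hC0 x ω) (mem_univ ω)
  have hsplit : prEqNe C ω + C ω ω = P ω := by
    rw [← hCP ω, prEqNe, filter_ne', sum_erase_add _ _ (mem_univ ω)]
  exact max_le (prEqNe_nonneg hC0 ω) (by linarith)

theorem estF_mem_Icc (hC0 : ∀ x y, 0 ≤ C x y) (hCP : ∀ ω, ∑ y, C ω y = P ω)
    (hCQ : ∀ ω, ∑ x, C x ω = Q ω) (ω : Ω) : estF P Q C ω ∈ Set.Icc 0 1 :=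
  ⟨div_nonneg (le_max_left _ _) (prEqNe_nonneg hC0 ω),
    div_le_one_of_le₀ (max_zero_sub_le_prEqNe hC0 hCP hCQ ω) (prEqNe_nonneg hC0 ω)⟩

theorem prEqNe_mul_estF (hC0 : ∀ x y, 0 ≤ C x y) (hCP : ∀ ω, ∑ y, C ω y = P ω)
    (hCQ : ∀ ω, ∑ x, C x ω = Q ω) (ω : Ω) :
    prEqNe C ω * estF P Q C ω = max 0 (P ω - Q ω) :=
  -- Off `Ω₊`, where `estF` divides by zero, the coupling inequality makes both sides vanish.
  mul_div_cancel_of_imp' fun h ↦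
    le_antisymm (h ▸ max_zero_sub_le_prEqNe hC0 hCP hCQ ω) (le_max_left _ _)

/-- The law `π` of `X` conditioned on `X ≠ Y`, from which the estimator draws its samples. It lives
on all of `Ω`, with mass zero outside `Ω₊`. -/
noncomputable def disagreementPMF (hC0 : ∀ x y, 0 ≤ C x y) (hpos : 0 < prNe C) : PMF Ω :=
  PMF.ofFintype (fun ω ↦ ENNReal.ofReal (prEqNe C ω / prNe C)) <| by
    rw [← ENNReal.ofReal_sum_of_nonneg fun ω _ ↦ div_nonneg (prEqNe_nonneg hC0 ω) hpos.le,
      ← sum_div, ← prNe, div_self hpos.ne', ENNReal.ofReal_one]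

variable [MeasurableSpace Ω] [MeasurableSingletonClass Ω]

theorem measureReal_disagreementPMF_singleton (hC0 : ∀ x y, 0 ≤ C x y) (hpos : 0 < prNe C)
    (ω : Ω) : (disagreementPMF hC0 hpos).toMeasure.real {ω} = prEqNe C ω / prNe C := by
  rw [measureReal_def, PMF.toMeasure_apply_singleton _ _ (measurableSet_singleton ω)]
  exact ENNReal.toReal_ofReal (div_nonneg (prEqNe_nonneg hC0 ω) hpos.le)

theorem integral_estF_disagreementPMF (hC0 : ∀ x y, 0 ≤ C x y) (hCP : ∀ ω, ∑ y, C ω y = P ω)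
    (hCQ : ∀ ω, ∑ x, C x ω = Q ω) (hpos : 0 < prNe C) :
    ∫ ω, estF P Q C ω ∂(disagreementPMF hC0 hpos).toMeasure = dTV P Q / prNe C := by
  have hmass : ∑ ω, P ω = ∑ ω, Q ω := by
    simp only [← hCP, ← hCQ]
    exact sum_comm
  simp only [integral_fintype .of_finite, measureReal_disagreementPMF_singleton, smul_eq_mul,
    div_mul_eq_mul_div, prEqNe_mul_estF hC0 hCP hCQ, ← sum_div,
    dTV_eq_sum_max_zero_sub hmass]

end Coupling

open Classical in
theorem monte_carlo_tv_estimator_general {Ω : Type*} [Fintype Ω] [DecidableEq Ω]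
    {P Q : Ω → ℝ} {C : Ω → Ω → ℝ} (hC0 : ∀ x y, 0 ≤ C x y)
    (hCP : ∀ ω, ∑ y, C ω y = P ω) (hCQ : ∀ ω, ∑ x, C x ω = Q ω)
    {γ ε δ : ℝ} (hγ : 0 < γ) (hε : 0 < ε) (hδ : 0 < δ)
    (hpos : 0 < prNe C) (hratio : γ ≤ dTV P Q / prNe C)
    {m : ℕ} (hm : 1 / (δ * (γ * ε ^ 2)) ≤ (m : ℝ)) :
    1 - δ ≤
      ∑ w ∈ univ.filter (fun w : Fin m → Ω ↦
          (1 - ε) * dTV P Q ≤ ((1 / (m : ℝ)) * ∑ i, estF P Q C (w i)) * prNe C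
          ∧ ((1 / (m : ℝ)) * ∑ i, estF P Q C (w i)) * prNe C ≤ (1 + ε) * dTV P Q),
        ∏ i, (prEqNe C (w i) / prNe C) := by
  let _ : MeasurableSpace Ω := ⊤
  set π := (disagreementPMF hC0 hpos).toMeasure
  have hmean : ∫ ω, estF P Q C ω ∂π = dTV P Q / prNe C :=
    integral_estF_disagreementPMF hC0 hCP hCQ hpos
  have concentration := one_sub_le_measureReal_pi_abs_expect_sub_le_mul (ι := Fin m) (μ := π)
    Measurable.of_discrete.aemeasurable (ae_of_all _ (estF_mem_Icc hC0 hCP hCQ)) hγ hε hδ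
    (hmean ▸ hratio) (by rwa [Fintype.card_fin])
  simpa only [hmean, abs_sub_div_le_mul_div_iff hpos, Fintype.expect_eq_sum_div_card,
    Fintype.card_fin, one_div_mul_eq_div, ← measureReal_disagreementPMF_singleton hC0 hpos,
    ← measureReal_pi_finset, coe_filter_univ] using concentration

open Classical in
/-- drawing `m ≥ 100/(γ ε²)` i.i.d. samples from
`π(ω) = Pr_C[X = ω ∧ X ≠ Y]/Pr_C[X ≠ Y]` (so a vector of samples `w : Fin m → Ω` has
probability `Π_i π(w i)`), the estimator `d̂ = (1/m Σ_i f(ω_i)) · Pr_C[X ≠ Y]` is a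
relative `(1 ± ε)`-approximation of `dTV(P, Q)` with probability at least `99/100`. -/
theorem monte_carlo_tv_estimator {Ω : Type*} [Fintype Ω] [DecidableEq Ω]
    (P Q : Ω → ℝ) (C : Ω → Ω → ℝ)
    (hP0 : ∀ ω, 0 ≤ P ω) (hP1 : ∑ ω, P ω = 1)
    (hQ0 : ∀ ω, 0 ≤ Q ω) (hQ1 : ∑ ω, Q ω = 1)
    (hC0 : ∀ x y, 0 ≤ C x y)
    (hCP : ∀ ω, ∑ y, C ω y = P ω)
    (hCQ : ∀ ω, ∑ x, C x ω = Q ω)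
    (γ ε : ℝ) (hγ : 0 < γ) (hε : 0 < ε)
    (hpos : 0 < prNe C)
    (hratio : γ ≤ dTV P Q / prNe C)
    (m : ℕ) (hm : 100 / (γ * ε ^ 2) ≤ (m : ℝ)) :
    (99/100 : ℝ) ≤
      ∑ w ∈ Finset.univ.filter (fun w : Fin m → Ω =>
          (1 - ε) * dTV P Q ≤ ((1 / (m : ℝ)) * ∑ i, estF P Q C (w i)) * prNe C
          ∧ ((1 / (m : ℝ)) * ∑ i, estF P Q C (w i)) * prNe C ≤ (1 + ε) * dTV P Q),
        ∏ i, (prEqNe C (w i) / prNe C) := by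
  calc (99 / 100 : ℝ) = 1 - 1 / 100 := by norm_num
    _ ≤ _ := monte_carlo_tv_estimator_general hC0 hCP hCQ hγ hε (by norm_num) hpos hratio
      (hm.trans_eq' (by field_simp))
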